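/- Let F be a function from the class 𝓗 to ℝ ∪ {+∞} which is invariant under isometries of ℝ², is lower semicontinuous along Hausdorff-convergent sequences in 𝓗 (i.e. liminf_n F(H_n) ≥ F(H) whenever H_n, H ∈ 𝓗 and H_n → H in Hausdorff distance), and is decreasing under Steiner symmetrization in the sense that F(S_π(H)) ≤ F(H) for every affine line π ⊆ ℝ² and every H ∈ 𝓗 such that S_π(H) ∈ 𝓗. Then, for any regular hexagon H* with |H*| = 1, one has F(H*) ≤ F(H) for every H ∈ 𝓗 with |H| = 1; that is, F attains its minimum over unit-area elements of 𝓗 at the regular hexagon. -/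

import Mathlib

open MeasureTheory Metric Filter Real Set
open scoped Topology ENNReal NNReal RealInnerProductSpace

noncomputable section

/-- The Euclidean plane. -/
abbrev E2 : Type := EuclideanSpace ℝ (Fin 2)

/-- The line through `x` with direction `v`. -/
def lineThrough (x v : E2) : Set E2 := {y : E2 | ∃ t : ℝ, y = x + t • v}

/-- Steiner symmetrization of `A` with respect to the affine line `{x | ⟪x, v⟫ = c}`,
where `v` is a unit normal vector of the line. -/
def steiner (v : E2) (c : ℝ) (A : Set E2) : Set E2 :=
  {y : E2 | ∃ x : E2, ⟪x, v⟫ = c ∧ (A ∩ lineThrough x v).Nonempty ∧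
    ∃ r : ℝ, y = x + r • v ∧
      ENNReal.ofReal (2 * |r|) ≤ μH[1] (A ∩ lineThrough x v)}

/-- The class `𝓗` of centrally symmetric convex hexagons (possibly degenerated to
parallelograms), i.e. the convex polygons tiling the plane by translations. -/
def Hex (H : Set E2) : Prop :=
  (∃ x₀ p q r : E2, H = (fun y => x₀ + y) '' convexHull ℝ ({p, q, r, -p, -q, -r} : Set E2)) ∧
  (interior H).Nonempty

/-- The `k`-th vertex of the standard regular hexagon. -/
def hexVertex (k : ℕ) : E2 :=
  (WithLp.equiv 2 (Fin 2 → ℝ)).symm ![Real.cos (k * π / 3), Real.sin (k * π / 3)]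

/-- The standard regular hexagon, with vertices `(cos (kπ/3), sin (kπ/3))`, `k = 0, …, 5`. -/
def stdHexagon : Set E2 := convexHull ℝ (Set.range fun k : Fin 6 => hexVertex k)

/-- A similarity of the plane (composition of a rotation, a dilation and a translation,
possibly with a reflection). -/
def IsSimilarity (f : E2 → E2) : Prop :=
  ∃ s : ℝ, 0 < s ∧ ∀ x y, dist (f x) (f y) = s * dist x y

/-- A regular hexagon is any image of the standard one under a similarity. -/
def IsRegularHexagon (H : Set E2) : Prop := ∃ f : E2 → E2, IsSimilarity f ∧ H = f '' stdHexagon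

/-- Convergence of a sequence of sets in the Hausdorff distance. -/
def HausdorffTendsto (Hn : ℕ → Set E2) (H : Set E2) : Prop :=
  Tendsto (fun n => EMetric.hausdorffEdist (Hn n) H) atTop (𝓝 0)

/-- The planar cross product (determinant) of two vectors. -/
def det2 (u w : E2) : ℝ := u 0 * w 1 - u 1 * w 0

/-- `A, B, C, D, E, F` are (consecutive) vertices of the centrally symmetric hexagon `H`:
`H` is their convex hull, `D, E, F` are the antipodes of `A, B, C` with respect to a center
`o`, and `H` has nonempty interior. -/
def HexWithVertices (A B C D E F : E2) (H : Set E2) : Prop :=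
  H = convexHull ℝ ({A, B, C, D, E, F} : Set E2) ∧
  (∃ o : E2, D = (2:ℝ) • o - A ∧ E = (2:ℝ) • o - B ∧ F = (2:ℝ) • o - C) ∧
  (interior H).Nonempty

/-- The vertices `A, B, C, D, E, F` are listed in counterclockwise order. -/
def CCWList (A B C D E F : E2) : Prop :=
  0 ≤ det2 (B - A) (C - B) ∧ 0 ≤ det2 (C - B) (D - C) ∧ 0 ≤ det2 (D - C) (E - D) ∧
  0 ≤ det2 (E - D) (F - E) ∧ 0 ≤ det2 (F - E) (A - F) ∧ 0 ≤ det2 (A - F) (B - A)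

/-- The six vertices are distinct and no three of them are collinear. -/
def NondegenerateHex (A B C D E F : E2) : Prop :=
  [A, B, C, D, E, F].Pairwise (· ≠ ·) ∧
  ∀ P Q R : E2, P ∈ ({A, B, C, D, E, F} : Set E2) → Q ∈ ({A, B, C, D, E, F} : Set E2) →
    R ∈ ({A, B, C, D, E, F} : Set E2) → P ≠ Q → P ≠ R → Q ≠ R →
      ¬ Collinear ℝ ({P, Q, R} : Set E2)

/-!
Choose vertices `p`, `q` of a hexagon centred at `0` for which the triangle `0 p q` has the largest
area. Up to replacing `q` by `-q`, the hexagon is then the parallelogram with vertices `±p`, `±q`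
with a (possibly flat) triangle glued to each of the two sides parallel to `p - q`, and Steiner
symmetrization in the direction `p - q` turns it into an axis-symmetric hexagon with vertices
`(±a, ±h)` and `(±γ a, 0)`, where `1 ≤ γ`. For area `1` the latter is determined up to isometry by
`γ` and `t = h ^ 2`.

Symmetrizing it again, now along its diagonal from `(-a, -h)` to `(γ a, 0)`, gives a hexagon of the
same kind with parameters `1 + 2 / γ` and `1 / (16 t) + t / 4`. Both maps, iterated, converge to
their positive fixed points `2` and `√3 / 6`, which are the parameters of the regular hexagon. Lower
semicontinuity carries the bound by `F H` along this sequence over to its limit.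
-/

section ConvexHull

variable {E : Type*} [AddCommGroup E] [Module ℝ E]

/-- The centrally symmetric hexagon with vertices `±p, ±q, ±r`, in any real vector space. -/
def hexHull (p q r : E) : Set E := convexHull ℝ {p, q, r, -p, -q, -r}

/-- A hexagon in coordinates: the hull of the parallelogram with vertices `±m ± w` and of the pair
of opposite points `±(γ • m + δ • w)`. When `1 ≤ γ` and `|δ| ≤ 1`, the segments
`[m - w, m + w]` and `[-m - w, -m + w]` are chords parallel to `w`, which cut the hexagon into the
parallelogram and two triangles. -/
def frameHex (m w : E) (γ δ : ℝ) : Set E := hexHull (m + w) (m - w) (γ • m + δ • w)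

lemma hexHull_rotate (p q r : E) : hexHull p q r = hexHull q r p := by
  unfold hexHull
  congr 1
  ext x
  simp only [mem_insert_iff, mem_singleton_iff]
  tauto

lemma hexHull_neg_right (p q r : E) : hexHull p q (-r) = hexHull p q r := by
  unfold hexHull
  congr 1
  ext x
  simp only [mem_insert_iff, mem_singleton_iff, neg_neg]
  tauto

lemma frameHex_neg_neg (m w : E) (γ δ : ℝ) : frameHex m w (-γ) (-δ) = frameHex m w γ δ := by
  rw [frameHex, frameHex, ← hexHull_neg_right]
  congr 1
  module

lemma frameHex_swap (m w : E) (γ δ : ℝ) : frameHex w m δ γ = frameHex m w γ δ := by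
  rw [frameHex, frameHex, add_comm w, add_comm (δ • w), ← neg_sub m w, ← hexHull_rotate,
    hexHull_neg_right, hexHull_rotate]

lemma image_hexHull {E' : Type*} [AddCommGroup E'] [Module ℝ E'] (L : E →ₗ[ℝ] E')
    (p q r : E) : L '' hexHull p q r = hexHull (L p) (L q) (L r) := by
  simp only [hexHull, LinearMap.image_convexHull, image_insert_eq, image_singleton, map_neg]

lemma image_frameHex {E' : Type*} [AddCommGroup E'] [Module ℝ E'] (L : E →ₗ[ℝ] E')
    (m w : E) (γ δ : ℝ) : L '' frameHex m w γ δ = frameHex (L m) (L w) γ δ := by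
  simp only [frameHex, image_hexHull, map_add, map_sub, map_smul]

lemma mem_segment_sub_add_iff {x m v : E} :
    v ∈ segment ℝ (x - m) (x + m) ↔ ∃ c : ℝ, |c| ≤ 1 ∧ v = x + c • m := by
  constructor
  · rintro ⟨a, b, ha, hb, hab, rfl⟩
    obtain rfl : a = 1 - b := by linarith
    exact ⟨b - (1 - b), abs_le.2 ⟨by linarith, by linarith⟩, by module⟩
  · rintro ⟨c, hc, rfl⟩
    obtain ⟨h₁, h₂⟩ := abs_le.1 hc
    exact ⟨(1 - c) / 2, (1 + c) / 2, by linarith, by linarith, by ring, by module⟩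

lemma mem_segment_neg_iff {m v : E} : v ∈ segment ℝ (-m) m ↔ ∃ c : ℝ, |c| ≤ 1 ∧ v = c • m := by
  simpa using mem_segment_sub_add_iff (x := 0) (m := m) (v := v)

open scoped Pointwise in
lemma hexHull_add_sub (m w r : E) :
    hexHull (m + w) (m - w) r =
      convexJoin ℝ (segment ℝ (-m) m + segment ℝ (-w) w) (segment ℝ (-r) r) := by
  rw [← convexHull_pair, ← convexHull_pair, ← convexHull_pair, ← convexHull_add,
    ← convexHull_union ((insert_nonempty _ _).add (insert_nonempty _ _)) (insert_nonempty _ _),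
    hexHull]
  congr 1
  ext x
  simp only [mem_union, Set.mem_add, mem_insert_iff, mem_singleton_iff, exists_eq_or_imp,
    exists_eq_left, eq_comm (b := x)]
  rw [neg_add, neg_sub', sub_eq_add_neg, sub_neg_eq_add]
  tauto

open scoped Pointwise in
lemma mem_hexHull_add_sub_iff {m w r v : E} :
    v ∈ hexHull (m + w) (m - w) r ↔
      ∃ μ x y : ℝ, |μ| ≤ 1 ∧ |x| ≤ 1 - |μ| ∧ |y| ≤ 1 - |μ| ∧ v = x • m + y • w + μ • r := by
  simp only [hexHull_add_sub, mem_convexJoin, Set.mem_add, mem_segment_neg_iff]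
  constructor
  · rintro ⟨_, ⟨_, ⟨x, hx, rfl⟩, _, ⟨y, hy, rfl⟩, rfl⟩, _, ⟨c, hc, rfl⟩, a, b, ha, hb, hab, rfl⟩
    have hbc : |b * c| ≤ b := by
      rw [abs_mul, abs_of_nonneg hb]
      exact mul_le_of_le_one_right hb hc
    have scaled_le : ∀ z : ℝ, |z| ≤ 1 → |a * z| ≤ 1 - |b * c| := fun z hz => by
      rw [abs_mul, abs_of_nonneg ha]
      linarith [mul_le_of_le_one_right ha hz]
    exact ⟨b * c, a * x, a * y, by linarith, scaled_le x hx, scaled_le y hy, by module⟩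
  · rintro ⟨μ, x, y, hμ, hx, hy, rfl⟩
    have div_le : ∀ z d : ℝ, |z| ≤ d → |z / d| ≤ 1 := fun z d hz => by
      rw [abs_div, abs_of_nonneg ((abs_nonneg z).trans hz)]
      exact div_le_one_of_le₀ hz ((abs_nonneg z).trans hz)
    have mul_div : ∀ z d : ℝ, |z| ≤ d → d * (z / d) = z := fun z d hz =>
      mul_div_cancel_of_imp' fun hd => abs_nonpos_iff.1 (hd ▸ hz)
    refine ⟨_, ⟨_, ⟨x / (1 - |μ|), div_le _ _ hx, rfl⟩, _, ⟨y / (1 - |μ|), div_le _ _ hy, rfl⟩,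
      rfl⟩, _, ⟨μ / |μ|, div_le _ _ le_rfl, rfl⟩, 1 - |μ|, |μ|, by linarith, abs_nonneg μ,
      by ring, ?_⟩
    rw [smul_add, smul_smul, smul_smul, smul_smul, mul_div _ _ hx, mul_div _ _ hy,
      mul_div _ _ le_rfl]

lemma mem_frameHex_iff_of_abs_le_one {m w v : E} {γ δ : ℝ} (hγ : |γ| ≤ 1) (hδ : |δ| ≤ 1) :
    v ∈ frameHex m w γ δ ↔ ∃ x y : ℝ, |x| ≤ 1 ∧ |y| ≤ 1 ∧ v = x • m + y • w := by
  rw [frameHex, mem_hexHull_add_sub_iff]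
  constructor
  · rintro ⟨μ, x, y, -, hx, hy, rfl⟩
    have add_le : ∀ a b : ℝ, |a| ≤ 1 - |μ| → |b| ≤ 1 → |a + μ * b| ≤ 1 := fun a b ha hb => by
      have := abs_add_le a (μ * b)
      rw [abs_mul] at this
      linarith [mul_le_of_le_one_right (abs_nonneg μ) hb]
    exact ⟨x + μ * γ, y + μ * δ, add_le x γ hx hγ, add_le y δ hy hδ, by module⟩
  · rintro ⟨x, y, hx, hy, rfl⟩
    exact ⟨0, x, y, by simp, by simpa using hx, by simpa using hy, by module⟩

end ConvexHull

section Sections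

/-- The least weight that the apexes `±(γ • m + δ • w)` of `frameHex m w γ δ` can carry in a point
whose coordinate along `m` is `s`: it vanishes for `|s| ≤ 1`, is odd, and increases linearly from
`0` at `s = 1` to `1` at `s = γ`. For `γ = 1` division by zero makes it vanish identically. -/
def tipWeight (γ s : ℝ) : ℝ := (max (s - 1) 0 + min (s + 1) 0) / (γ - 1)

lemma tipWeight_of_abs_le_one (γ : ℝ) {s : ℝ} (hs : |s| ≤ 1) : tipWeight γ s = 0 := by
  obtain ⟨h₁, h₂⟩ := abs_le.1 hs
  rw [tipWeight, max_eq_right (by linarith), min_eq_right (by linarith), add_zero, zero_div]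

lemma tipWeight_of_one_le (γ : ℝ) {s : ℝ} (hs : 1 ≤ s) : tipWeight γ s = (s - 1) / (γ - 1) := by
  rw [tipWeight, max_eq_left (by linarith), min_eq_right (by linarith), add_zero]

lemma tipWeight_neg (γ s : ℝ) : tipWeight γ (-s) = -tipWeight γ s := by
  rw [tipWeight, tipWeight, ← neg_div, neg_add, ← min_neg_neg, ← max_neg_neg]
  congr 1
  rw [add_comm]
  congr 2 <;> ring

lemma continuous_tipWeight (γ : ℝ) : Continuous (tipWeight γ) := by
  unfold tipWeight
  fun_prop

lemma abs_sub_mul_tipWeight_le {γ s : ℝ} (hs : |s| ≤ γ) :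
    |s - γ * tipWeight γ s| ≤ 1 - |tipWeight γ s| := by
  wlog h₀ : 0 ≤ s generalizing s
  · have := this (s := -s) (by rwa [abs_neg]) (by linarith)
    rwa [tipWeight_neg, mul_neg, neg_sub_neg, abs_sub_comm, abs_neg] at this
  rw [abs_of_nonneg h₀] at hs
  rcases le_or_gt s 1 with h₁ | h₁
  · rw [tipWeight_of_abs_le_one γ (abs_le.2 ⟨by linarith, h₁⟩)]
    simpa [abs_of_nonneg h₀] using h₁
  · rw [tipWeight_of_one_le γ h₁.le]
    have hγ : 0 < γ - 1 := by linarith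
    have hle : (s - 1) / (γ - 1) ≤ 1 := (div_le_one hγ).2 (by linarith)
    have heq : s - γ * ((s - 1) / (γ - 1)) = 1 - (s - 1) / (γ - 1) := by field_simp; ring
    rw [heq, abs_of_nonneg (by linarith), abs_of_nonneg (div_nonneg (by linarith) hγ.le)]

lemma abs_tipWeight_le_one {γ s : ℝ} (hs : |s| ≤ γ) : |tipWeight γ s| ≤ 1 :=
  sub_nonneg.1 ((abs_nonneg _).trans (abs_sub_mul_tipWeight_le hs))

lemma abs_sub_tipWeight_le {γ μ s : ℝ} (hγ : 1 ≤ γ) (h : |s - μ * γ| ≤ 1 - |μ|) :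
    |μ - tipWeight γ s| ≤ |μ| - |tipWeight γ s| := by
  wlog h₀ : 0 ≤ s generalizing s μ
  · have := this (s := -s) (μ := -μ) (by rwa [neg_mul, neg_sub_neg, abs_sub_comm, abs_neg])
      (by linarith)
    rwa [tipWeight_neg, neg_sub_neg, abs_sub_comm, abs_neg, abs_neg] at this
  rcases le_or_gt s 1 with h₁ | h₁
  · simp [tipWeight_of_abs_le_one γ (abs_le.2 ⟨by linarith, h₁⟩)]
  · have hle : s ≤ 1 - |μ| + μ * γ := by linarith [le_abs_self (s - μ * γ)]
    have hμ : 0 < μ := by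
      by_contra! hμ
      nlinarith [abs_nonneg μ]
    rw [abs_of_pos hμ] at hle
    have hγ' : 0 < γ - 1 := by
      by_contra! hγ'
      nlinarith
    rw [tipWeight_of_one_le γ h₁.le, abs_of_pos hμ,
      abs_of_nonneg (div_nonneg (by linarith : 0 ≤ s - 1) hγ'.le), abs_of_nonneg]
    rw [sub_nonneg, div_le_iff₀ hγ']
    linarith

variable {E : Type*} [AddCommGroup E] [Module ℝ E]

/-- The set of points whose coordinate `s` along `m` lies in `I` and whose coordinate along `w`
is at distance at most `g s` from `c s`: the sections parallel to `w` are segments, with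
midpoint `c s` and half-length `g s` in units of `w`. -/
def slab (m w : E) (I : Set ℝ) (c g : ℝ → ℝ) : Set E :=
  {v | ∃ s ∈ I, ∃ t, |t - c s| ≤ g s ∧ v = s • m + t • w}

lemma slab_shear (m w : E) (κ : ℝ) (I : Set ℝ) (c g : ℝ → ℝ) :
    slab (m + κ • w) w I c g = slab m w I (fun s => c s + κ * s) g := by
  ext v
  constructor
  · rintro ⟨s, hs, t, ht, rfl⟩
    exact ⟨s, hs, t + κ * s, by rwa [add_sub_add_right_eq_sub], by module⟩
  · rintro ⟨s, hs, t, ht, rfl⟩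
    exact ⟨s, hs, t - κ * s, by rwa [sub_sub, add_comm (κ * s)], by module⟩

lemma image_slab {E' : Type*} [AddCommGroup E'] [Module ℝ E'] (L : E →ₗ[ℝ] E') (m w : E)
    (I : Set ℝ) (c g : ℝ → ℝ) : L '' slab m w I c g = slab (L m) (L w) I c g := by
  ext v
  constructor
  · rintro ⟨_, ⟨s, hs, t, ht, rfl⟩, rfl⟩
    exact ⟨s, hs, t, ht, by simp⟩
  · rintro ⟨s, hs, t, ht, rfl⟩
    exact ⟨_, ⟨s, hs, t, ht, rfl⟩, by simp⟩

lemma frameHex_eq_slab (m w : E) {γ δ : ℝ} (hγ : 1 ≤ γ) (hδ : |δ| ≤ 1) :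
    frameHex m w γ δ =
      slab m w (Icc (-γ) γ) (fun s => δ * tipWeight γ s) (fun s => 1 - |tipWeight γ s|) := by
  ext v
  rw [frameHex, mem_hexHull_add_sub_iff]
  constructor
  · rintro ⟨μ, x, y, hμ, hx, hy, rfl⟩
    have hs : |x + μ * γ| ≤ γ := by
      have := abs_add_le x (μ * γ)
      rw [abs_mul, abs_of_pos (by linarith : 0 < γ)] at this
      nlinarith
    have htip : |μ - tipWeight γ (x + μ * γ)| ≤ |μ| - |tipWeight γ (x + μ * γ)| :=
      abs_sub_tipWeight_le hγ (by simpa using hx)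
    refine ⟨x + μ * γ, abs_le.1 hs, y + μ * δ, ?_, by module⟩
    calc |y + μ * δ - δ * tipWeight γ (x + μ * γ)|
        = |y + δ * (μ - tipWeight γ (x + μ * γ))| := by ring_nf
      _ ≤ |y| + |δ| * |μ - tipWeight γ (x + μ * γ)| := by
        rw [← abs_mul]; exact abs_add_le _ _
      _ ≤ (1 - |μ|) + (|μ| - |tipWeight γ (x + μ * γ)|) :=
        add_le_add hy ((mul_le_of_le_one_left (abs_nonneg _) hδ).trans htip)
      _ = 1 - |tipWeight γ (x + μ * γ)| := by ring
  · rintro ⟨s, hs, t, ht, rfl⟩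
    have hs' : |s| ≤ γ := abs_le.2 hs
    exact ⟨tipWeight γ s, s - γ * tipWeight γ s, t - δ * tipWeight γ s, abs_tipWeight_le_one hs',
      abs_sub_mul_tipWeight_le hs', ht, by module⟩

end Sections

section Determinant

lemma det2_self (m : E2) : det2 m m = 0 := by
  rw [det2, mul_comm, sub_self]

lemma det2_add_left (x y z : E2) : det2 (x + y) z = det2 x z + det2 y z := by
  simp only [det2, PiLp.add_apply]
  ring

lemma det2_smul_left (a : ℝ) (x y : E2) : det2 (a • x) y = a * det2 x y := by
  simp only [det2, PiLp.smul_apply, smul_eq_mul]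
  ring

lemma det2_neg_swap (m w : E2) : det2 w m = -det2 m w := by
  simp only [det2]
  ring

lemma det2_add_right (x y z : E2) : det2 x (y + z) = det2 x y + det2 x z := by
  simp only [det2_neg_swap _ x, det2_add_left, neg_add]

lemma det2_smul_right (a : ℝ) (x y : E2) : det2 x (a • y) = a * det2 x y := by
  simp only [det2_neg_swap _ x, det2_smul_left, mul_neg]

lemma det2_linearCombination_left (m w : E2) (s t : ℝ) :
    det2 (s • m + t • w) w = s * det2 m w := by
  rw [det2_add_left, det2_smul_left, det2_smul_left, det2_self, mul_zero, add_zero]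

lemma det2_sub_smul_left (m w : E2) (κ : ℝ) : det2 (m - κ • w) w = det2 m w := by
  rw [sub_eq_add_neg, ← neg_smul, det2_add_left, det2_smul_left, det2_self, mul_zero, add_zero]

lemma exists_eq_smul_add_smul {m w : E2} (h : det2 m w ≠ 0) (v : E2) :
    v = (det2 v w / det2 m w) • m + (det2 m v / det2 m w) • w := by
  ext i
  simp only [PiLp.add_apply, PiLp.smul_apply, smul_eq_mul]
  field_simp
  fin_cases i <;> simp [det2] <;> ring

lemma det2_sq (m w : E2) : det2 m w ^ 2 = ‖m‖ ^ 2 * ‖w‖ ^ 2 - ⟪m, w⟫ ^ 2 := by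
  simp only [det2, EuclideanSpace.real_norm_sq_eq, PiLp.inner_apply, Fin.sum_univ_two,
    RCLike.inner_apply, conj_trivial]
  ring

lemma right_ne_zero_of_det2_ne_zero {m w : E2} (h : det2 m w ≠ 0) : w ≠ 0 := by
  rintro rfl
  simp [det2] at h

end Determinant

section Steiner

variable {m w : E2} {I : Set ℝ} {c g : ℝ → ℝ}

lemma slab_inter_lineThrough (hdet : det2 m w ≠ 0) {s k : ℝ} (hs : s ∈ I) (hg : 0 ≤ g s)
    (hk : k ≠ 0) :
    slab m w I c g ∩ lineThrough (s • m) (k • w) =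
      segment ℝ (s • m + c s • w - g s • w) (s • m + c s • w + g s • w) := by
  ext v
  rw [mem_segment_sub_add_iff]
  constructor
  · rintro ⟨⟨s', -, t, ht, rfl⟩, t', h⟩
    obtain rfl : s' = s := by
      have := congrArg (det2 · w) h
      simp only [smul_smul, det2_linearCombination_left] at this
      exact mul_right_cancel₀ hdet this
    refine ⟨(t - c s') / g s', ?_, ?_⟩
    · rw [abs_div, abs_of_nonneg hg]
      exact div_le_one_of_le₀ ht hg
    · rw [smul_smul, div_mul_cancel_of_imp fun h₀ => abs_nonpos_iff.1 (h₀ ▸ ht)]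
      module
  · rintro ⟨a, ha, rfl⟩
    refine ⟨⟨s, hs, c s + a * g s, ?_, by module⟩, k⁻¹ * (c s + a * g s), ?_⟩
    · rw [add_sub_cancel_left, abs_mul, abs_of_nonneg hg]
      exact mul_le_of_le_one_left hg ha
    · rw [smul_smul (k⁻¹ * _), mul_right_comm, inv_mul_cancel₀ hk]
      module

lemma hausdorffMeasure_slab_inter_lineThrough (hdet : det2 m w ≠ 0) {s k : ℝ} (hs : s ∈ I)
    (hg : 0 ≤ g s) (hk : k ≠ 0) :
    μH[1] (slab m w I c g ∩ lineThrough (s • m) (k • w)) = ENNReal.ofReal (2 * (g s * ‖w‖)) := by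
  have hsub : s • m + c s • w + g s • w - (s • m + c s • w - g s • w) = (2 * g s) • w := by module
  rw [slab_inter_lineThrough hdet hs hg hk, hausdorffMeasure_segment, edist_comm, edist_dist,
    dist_eq_norm, hsub, norm_smul, Real.norm_of_nonneg (by positivity), mul_assoc]

lemma steiner_slab (hmw : ⟪m, w⟫ = 0) (hdet : det2 m w ≠ 0) (hg : ∀ s ∈ I, 0 ≤ g s) :
    steiner (‖w‖⁻¹ • w) 0 (slab m w I c g) = slab m w I 0 g := by
  have hw : ‖w‖ ≠ 0 := norm_ne_zero_iff.2 (right_ne_zero_of_det2_ne_zero hdet)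
  have hw' : 0 < ‖w‖ := (norm_nonneg w).lt_of_ne' hw
  ext y
  constructor
  · rintro ⟨x, hx, ⟨z, ⟨s, hs, t, -, hz⟩, t', hz'⟩, r, rfl, hr⟩
    obtain rfl : x = s • m := by
      have hxw : ⟪x, w⟫ = 0 := by simpa [inner_smul_right, hw] using hx
      obtain rfl : x = s • m + (t - t' * ‖w‖⁻¹) • w := by
        rw [← sub_eq_iff_eq_add] at hz'
        rw [← hz', hz]
        module
      rw [inner_add_left, inner_smul_left, inner_smul_left, hmw, mul_zero, zero_add,
        real_inner_self_eq_norm_sq, mul_eq_zero_iff_right (pow_ne_zero 2 hw)] at hxw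
      rw [show t - t' * ‖w‖⁻¹ = 0 from hxw, zero_smul, add_zero]
    rw [hausdorffMeasure_slab_inter_lineThrough hdet hs (hg s hs) (inv_ne_zero hw),
      ENNReal.ofReal_le_ofReal_iff (by have := hg s hs; positivity)] at hr
    refine ⟨s, hs, r * ‖w‖⁻¹, ?_, by rw [smul_smul]⟩
    rw [Pi.zero_apply, sub_zero, abs_mul, abs_inv, abs_norm, ← div_eq_mul_inv, div_le_iff₀ hw']
    linarith
  · rintro ⟨s, hs, t, ht, rfl⟩
    rw [Pi.zero_apply, sub_zero] at ht
    have hx : ⟪s • m, ‖w‖⁻¹ • w⟫ = 0 := by simp [inner_smul_left, inner_smul_right, hmw]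
    refine ⟨s • m, hx, ?_, t * ‖w‖, ?_, ?_⟩
    · rw [slab_inter_lineThrough hdet hs (hg s hs) (inv_ne_zero hw)]
      exact ⟨_, left_mem_segment ℝ _ _⟩
    · rw [smul_smul, mul_assoc, mul_inv_cancel₀ hw, mul_one]
    · rw [hausdorffMeasure_slab_inter_lineThrough hdet hs (hg s hs) (inv_ne_zero hw), abs_mul,
        abs_norm]
      gcongr

lemma inner_sub_smul_self_eq_zero {E : Type*} [NormedAddCommGroup E] [InnerProductSpace ℝ E]
    {w : E} (hw : w ≠ 0) (m : E) : ⟪m - (⟪m, w⟫ / ‖w‖ ^ 2) • w, w⟫ = 0 := by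
  rw [inner_sub_left, real_inner_smul_left, real_inner_self_eq_norm_sq,
    div_mul_cancel₀ _ (pow_ne_zero 2 (norm_ne_zero_iff.2 hw)), sub_self]

lemma steiner_frameHex {m w : E2} (hdet : det2 m w ≠ 0) {γ δ : ℝ} (hγ : 1 ≤ γ) (hδ : |δ| ≤ 1) :
    steiner (‖w‖⁻¹ • w) 0 (frameHex m w γ δ) =
      frameHex (m - (⟪m, w⟫ / ‖w‖ ^ 2) • w) w γ 0 := by
  set κ := ⟪m, w⟫ / ‖w‖ ^ 2
  have horth : ⟪m - κ • w, w⟫ = 0 :=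
    inner_sub_smul_self_eq_zero (right_ne_zero_of_det2_ne_zero hdet) m
  have hshear := slab_shear (m - κ • w) w κ (Icc (-γ) γ) (fun s => δ * tipWeight γ s)
    (fun s => 1 - |tipWeight γ s|)
  rw [sub_add_cancel] at hshear
  rw [frameHex_eq_slab m w hγ hδ, frameHex_eq_slab _ w hγ (by simp), hshear,
    steiner_slab horth (by rwa [det2_sub_smul_left])
      fun s (hs : s ∈ Icc (-γ) γ) => sub_nonneg.2 (abs_tipWeight_le_one (abs_le.2 hs))]
  simp only [zero_mul]
  rfl

end Steiner

section Area

lemma measurePreserving_coordinates : MeasurePreserving (fun v : E2 => (v 0, v 1)) :=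
  (volume_preserving_finTwoArrow ℝ).comp (PiLp.volume_preserving_ofLp (Fin 2))

lemma exists_linearMap_det_eq_det2 (m w : E2) :
    ∃ L : E2 →ₗ[ℝ] E2, L !₂[1, 0] = m ∧ L !₂[0, 1] = w ∧ LinearMap.det L = det2 m w := by
  let b := (EuclideanSpace.basisFun (Fin 2) ℝ).toBasis
  refine ⟨Matrix.toLin b b !![m 0, w 0; m 1, w 1], ?_, ?_, ?_⟩
  · have : (!₂[1, 0] : E2) = b 0 := by ext i; fin_cases i <;> simp [b]
    rw [this, Matrix.toLin_self]
    ext i; fin_cases i <;> simp [b]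
  · have : (!₂[0, 1] : E2) = b 1 := by ext i; fin_cases i <;> simp [b]
    rw [this, Matrix.toLin_self]
    ext i; fin_cases i <;> simp [b]
  · rw [LinearMap.det_toLin, Matrix.det_fin_two_of, det2]
    ring

lemma volume_slab_standard {I : Set ℝ} (hI : MeasurableSet I) {c g : ℝ → ℝ} (hc : Measurable c)
    (hg : Measurable g) :
    volume (slab (!₂[1, 0] : E2) !₂[0, 1] I c g) = ∫⁻ s in I, ENNReal.ofReal (2 * g s) := by
  let R : Set (ℝ × ℝ) := {x | x.1 ∈ I ∧ |x.2 - c x.1| ≤ g x.1}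
  have hR : MeasurableSet R :=
    (measurable_fst hI).inter (measurableSet_le
      (by fun_prop : Measurable fun x : ℝ × ℝ => |x.2 - c x.1|) (hg.comp measurable_fst))
  have hslab : slab (!₂[1, 0] : E2) !₂[0, 1] I c g = (fun v : E2 => (v 0, v 1)) ⁻¹' R := by
    ext v
    constructor
    · rintro ⟨s, hs, t, ht, rfl⟩
      simpa [R] using ⟨hs, ht⟩
    · rintro ⟨hs, ht⟩
      refine ⟨v 0, hs, v 1, ht, ?_⟩
      ext i
      fin_cases i <;> simp
  rw [hslab, measurePreserving_coordinates.measure_preimage hR.nullMeasurableSet,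
    Measure.volume_eq_prod, Measure.prod_apply hR, ← lintegral_indicator hI]
  congr 1 with s
  by_cases hs : s ∈ I
  · have hsection : Prod.mk s ⁻¹' R = closedBall (c s) (g s) := by
      ext t; simp [R, hs, Real.dist_eq]
    rw [indicator_of_mem hs, hsection, Real.volume_closedBall]
  · have hsection : Prod.mk s ⁻¹' R = ∅ := by ext t; simp [R, hs]
    rw [indicator_of_notMem hs, hsection, measure_empty]

lemma volume_slab (m w : E2) {I : Set ℝ} (hI : MeasurableSet I) {c g : ℝ → ℝ} (hc : Measurable c)
    (hg : Measurable g) :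
    volume (slab m w I c g) =
      ENNReal.ofReal |det2 m w| * ∫⁻ s in I, ENNReal.ofReal (2 * g s) := by
  obtain ⟨L, rfl, rfl, hL⟩ := exists_linearMap_det_eq_det2 m w
  rw [← hL, ← image_slab, Measure.addHaar_image_linearMap, volume_slab_standard hI hc hg]

lemma integral_abs_tipWeight {γ : ℝ} (hγ : 1 ≤ γ) :
    ∫ s in (-γ)..γ, |tipWeight γ s| = γ - 1 := by
  have hint : ∀ a b : ℝ, IntervalIntegrable (fun s => |tipWeight γ s|) volume a b :=
    (continuous_tipWeight γ).abs.intervalIntegrable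
  have right : ∫ s in (1:ℝ)..γ, |tipWeight γ s| = (γ - 1) / 2 := by
    rw [intervalIntegral.integral_congr (g := fun s => (s - 1) / (γ - 1)) fun s hs => ?_]
    · rw [intervalIntegral.integral_div, intervalIntegral.integral_comp_sub_right (fun s => s),
        integral_id, sub_self, zero_pow two_ne_zero, sub_zero, div_right_comm, sq,
        mul_self_div_self]
    · rw [uIcc_of_le hγ] at hs
      simp only [tipWeight_of_one_le γ hs.1]
      exact abs_of_nonneg (div_nonneg (by linarith [hs.1]) (by linarith))
  have left : ∫ s in (-γ)..(-1), |tipWeight γ s| = (γ - 1) / 2 := by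
    rw [← right, ← intervalIntegral.integral_comp_neg]
    simp only [tipWeight_neg, abs_neg]
  have middle : ∫ s in (-1:ℝ)..1, |tipWeight γ s| = 0 := by
    rw [intervalIntegral.integral_congr (g := fun _ => 0) fun s hs => ?_,
      intervalIntegral.integral_zero]
    rw [uIcc_of_le (by norm_num)] at hs
    simp only [tipWeight_of_abs_le_one γ (abs_le.2 hs), abs_zero]
  rw [← intervalIntegral.integral_add_adjacent_intervals (hint _ (-1)) (hint _ _),
    ← intervalIntegral.integral_add_adjacent_intervals (hint (-1) 1) (hint _ _), left, middle,
    right]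
  ring

lemma volume_frameHex (m w : E2) {γ δ : ℝ} (hγ : 1 ≤ γ) (hδ : |δ| ≤ 1) :
    volume (frameHex m w γ δ) = ENNReal.ofReal (2 * (γ + 1) * |det2 m w|) := by
  have hcont := continuous_tipWeight γ
  have hg : ∀ s ∈ Icc (-γ) γ, 0 ≤ 2 * (1 - |tipWeight γ s|) := fun s hs => by
    linarith [abs_tipWeight_le_one (abs_le.2 hs)]
  have hint : ∫ s in (-γ)..γ, 2 * (1 - |tipWeight γ s|) = 2 * (γ + 1) := by
    rw [intervalIntegral.integral_const_mul, intervalIntegral.integral_sub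
      intervalIntegrable_const (hcont.abs.intervalIntegrable _ _), integral_abs_tipWeight hγ,
      intervalIntegral.integral_const, smul_eq_mul]
    ring
  rw [frameHex_eq_slab m w hγ hδ, volume_slab m w measurableSet_Icc (by fun_prop) (by fun_prop),
    ← ofReal_integral_eq_lintegral_ofReal
      (Continuous.integrableOn_Icc (by fun_prop))
      ((ae_restrict_iff' measurableSet_Icc).2 (.of_forall hg)),
    integral_Icc_eq_integral_Ioc, ← intervalIntegral.integral_of_le (by linarith), hint,
    ← ENNReal.ofReal_mul (abs_nonneg _), mul_comm]

end Area

section ConvexPosition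

lemma interior_nonempty_of_volume_ne_zero {s : Set E2} (hs : Convex ℝ s) (hvol : volume s ≠ 0) :
    (interior s).Nonempty := by
  by_contra h
  refine hvol (measure_mono_null (subset_closure.trans_eq ?_) (hs.addHaar_frontier volume))
  rw [frontier, not_nonempty_iff_eq_empty.1 h, sdiff_empty]

lemma hex_hexHull {p q r : E2} (h : (interior (hexHull p q r)).Nonempty) :
    Hex (hexHull p q r) :=
  ⟨⟨0, p, q, r, by simp [hexHull]⟩, h⟩

lemma hex_frameHex {m w : E2} (hdet : det2 m w ≠ 0) {γ δ : ℝ} (hγ : 1 ≤ γ) (hδ : |δ| ≤ 1) :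
    Hex (frameHex m w γ δ) := by
  refine hex_hexHull (interior_nonempty_of_volume_ne_zero (convex_convexHull ℝ _) ?_)
  change volume (frameHex m w γ δ) ≠ 0
  rw [volume_frameHex m w hγ hδ]
  have := abs_pos.2 hdet
  simp only [ne_eq, ENNReal.ofReal_eq_zero, not_le]
  positivity

lemma span_eq_top_of_interior_hexHull_nonempty {E : Type*} [NormedAddCommGroup E]
    [NormedSpace ℝ E] {p q r : E} (h : (interior (hexHull p q r)).Nonempty) :
    Submodule.span ℝ {p, q, r} = ⊤ := by
  set S := Submodule.span ℝ {p, q, r}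
  have hp : p ∈ S := Submodule.subset_span (by simp)
  have hq : q ∈ S := Submodule.subset_span (by simp)
  have hr : r ∈ S := Submodule.subset_span (by simp)
  have hsub : hexHull p q r ⊆ S := by
    refine convexHull_min ?_ S.convex
    simp [insert_subset_iff, hp, hq, hr]
  exact S.eq_top_of_nonempty_interior' (h.mono (interior_mono hsub))

lemma exists_det2_ne_zero_of_span_eq_top {p q r : E2} (h : Submodule.span ℝ {p, q, r} = ⊤) :
    det2 p q ≠ 0 ∨ det2 q r ≠ 0 ∨ det2 r p ≠ 0 := by
  by_contra! hzero
  obtain ⟨hpq, hqr, hrp⟩ := hzero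
  have vanish : ∀ x ∈ Submodule.span ℝ {p, q, r}, ∀ y ∈ Submodule.span ℝ {p, q, r},
      det2 x y = 0 := by
    intro x hx y hy
    induction hx, hy using Submodule.span_induction₂ with
    | mem_mem x y hx hy =>
      rcases hx with rfl | rfl | rfl <;> rcases hy with rfl | rfl | rfl <;>
        first
        | assumption
        | rwa [det2_neg_swap, neg_eq_zero]
        | exact det2_self _
    | zero_left => simp [det2]
    | zero_right => simp [det2]
    | add_left x y z _ _ _ hx hy => rw [det2_add_left, hx, hy, add_zero]
    | add_right x y z _ _ _ hy hz => rw [det2_add_right, hy, hz, add_zero]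
    | smul_left a x y _ _ hxy => rw [det2_smul_left, hxy, mul_zero]
    | smul_right a x y _ _ hxy => rw [det2_smul_right, hxy, mul_zero]
  have := vanish !₂[1, 0] (h ▸ Submodule.mem_top) !₂[0, 1] (h ▸ Submodule.mem_top)
  simp [det2] at this

lemma exists_hexHull_eq_maximal_det2 {p q r : E2}
    (h : det2 p q ≠ 0 ∨ det2 q r ≠ 0 ∨ det2 r p ≠ 0) :
    ∃ p' q' r' : E2, hexHull p q r = hexHull p' q' r' ∧ det2 p' q' ≠ 0 ∧
      |det2 q' r'| ≤ |det2 p' q'| ∧ |det2 r' p'| ≤ |det2 p' q'| := by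
  have ne_zero_of_max : ∀ a b c : ℝ, (a ≠ 0 ∨ b ≠ 0 ∨ c ≠ 0) → |b| ≤ |a| → |c| ≤ |a| → a ≠ 0 := by
    rintro a b c hne hb hc rfl
    simp_all
  by_cases h₁ : |det2 q r| ≤ |det2 p q| ∧ |det2 r p| ≤ |det2 p q|
  · exact ⟨p, q, r, rfl, ne_zero_of_max _ _ _ h h₁.1 h₁.2, h₁⟩
  by_cases h₂ : |det2 r p| ≤ |det2 q r| ∧ |det2 p q| ≤ |det2 q r|
  · exact ⟨q, r, p, hexHull_rotate p q r, ne_zero_of_max _ _ _ (by tauto) h₂.1 h₂.2, h₂⟩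
  have h₃ : |det2 p q| ≤ |det2 r p| ∧ |det2 q r| ≤ |det2 r p| := by grind
  exact ⟨r, p, q, (hexHull_rotate r p q).symm, ne_zero_of_max _ _ _ (by tauto) h₃.1 h₃.2, h₃⟩

lemma exists_one_le_frameHex_eq {m w : E2} (hdet : det2 m w ≠ 0) {γ δ : ℝ}
    (hsum : |γ| + |δ| ≤ 2) :
    ∃ (m' w' : E2) (γ' δ' : ℝ), det2 m' w' ≠ 0 ∧ 1 ≤ γ' ∧ |δ'| ≤ 1 ∧
      frameHex m w γ δ = frameHex m' w' γ' δ' := by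
  rcases le_total |γ| 1 with hγ | hγ
  · rcases le_total |δ| 1 with hδ | hδ
    · refine ⟨m, w, 1, 1, hdet, le_rfl, abs_one.le, ?_⟩
      ext v
      rw [mem_frameHex_iff_of_abs_le_one hγ hδ,
        mem_frameHex_iff_of_abs_le_one abs_one.le abs_one.le]
    · have hdet' : det2 w m ≠ 0 := by rwa [det2_neg_swap, neg_ne_zero]
      rcases le_abs'.1 hδ with h | h
      · exact ⟨w, m, -δ, -γ, hdet', by linarith, by rwa [abs_neg],
          by rw [frameHex_neg_neg, frameHex_swap]⟩
      · exact ⟨w, m, δ, γ, hdet', h, hγ, (frameHex_swap m w γ δ).symm⟩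
  · have hδ : |δ| ≤ 1 := by linarith
    rcases le_abs'.1 hγ with h | h
    · exact ⟨m, w, -γ, -δ, hdet, by linarith, by rwa [abs_neg], (frameHex_neg_neg m w γ δ).symm⟩
    · exact ⟨m, w, γ, δ, hdet, h, hδ, rfl⟩

/-- Expand the third vertex in the two vertices that span the triangle of largest area with the
centre: by Cramer's rule its coordinates have modulus at most `1`. -/
lemma exists_hexHull_eq_frameHex {p q r : E2} (h : (interior (hexHull p q r)).Nonempty) :
    ∃ (m w : E2) (γ δ : ℝ), det2 m w ≠ 0 ∧ 1 ≤ γ ∧ |δ| ≤ 1 ∧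
      hexHull p q r = frameHex m w γ δ := by
  obtain ⟨p, q, r, heq, hdet, hqr, hrp⟩ := exists_hexHull_eq_maximal_det2
    (exists_det2_ne_zero_of_span_eq_top (span_eq_top_of_interior_hexHull_nonempty h))
  set α := det2 r q / det2 p q
  set β := det2 p r / det2 p q
  have hr : r = α • p + β • q := exists_eq_smul_add_smul hdet r
  have hα : |α| ≤ 1 := by
    rw [abs_div, det2_neg_swap q r, abs_neg]
    exact div_le_one_of_le₀ hqr (abs_nonneg _)
  have hβ : |β| ≤ 1 := by
    rw [abs_div, det2_neg_swap r p, abs_neg]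
    exact div_le_one_of_le₀ hrp (abs_nonneg _)
  have hframe : hexHull p q r =
      frameHex ((2⁻¹ : ℝ) • (p + q)) ((2⁻¹ : ℝ) • (p - q)) (α + β) (α - β) := by
    rw [frameHex]
    congr 1
    · module
    · module
    · rw [hr]; module
  have hdet' : det2 ((2⁻¹ : ℝ) • (p + q)) ((2⁻¹ : ℝ) • (p - q)) ≠ 0 := by
    have : det2 ((2⁻¹ : ℝ) • (p + q)) ((2⁻¹ : ℝ) • (p - q)) = -2⁻¹ * det2 p q := by
      simp only [det2, PiLp.add_apply, PiLp.sub_apply, PiLp.smul_apply, smul_eq_mul]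
      ring
    rw [this]
    exact mul_ne_zero (by norm_num) hdet
  have hsum : |α + β| + |α - β| ≤ 2 := by
    rw [abs_le] at hα hβ
    rcases abs_cases (α + β) with h₁ | h₁ <;> rcases abs_cases (α - β) with h₂ | h₂ <;> linarith
  rw [heq, hframe]
  exact exists_one_le_frameHex_eq hdet' hsum

end ConvexPosition

section Symmetrization

/-- `SymmetrizesTo H K` holds when `K` is obtained from `H` by finitely many isometries and Steiner
symmetrizations that all stay in the class `Hex`. -/
inductive SymmetrizesTo : Set E2 → Set E2 → Prop
  | isometry (f : E2 ≃ᵢ E2) {H : Set E2} (hH : Hex H) : SymmetrizesTo H (f '' H)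
  | steiner {v : E2} (c : ℝ) {H : Set E2} (hv : ‖v‖ = 1) (hH : Hex H)
      (hK : Hex (steiner v c H)) : SymmetrizesTo H (steiner v c H)
  | trans {H K L : Set E2} (hHK : SymmetrizesTo H K) (hKL : SymmetrizesTo K L) : SymmetrizesTo H L

/-- The hexagon of unit area with vertices `(±a, ±√t)` and `(±γ * a, 0)`, for `1 ≤ γ`
and `0 < t`; the half-width `a` is determined by the area. -/
def unitHex (γ t : ℝ) : Set E2 := frameHex !₂[1 / (2 * (γ + 1) * √t), 0] !₂[0, √t] γ 0

/-- The ratio of the axis-symmetric hexagon obtained from `unitHex γ t` by symmetrizing along its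
diagonal from `(-a, -√t)` to `(γ * a, 0)`. -/
def nextRatio (γ : ℝ) : ℝ := 1 + 2 / γ

/-- The squared half-height of the axis-symmetric hexagon obtained from `unitHex γ t` by
symmetrizing along its diagonal from `(-a, -√t)` to `(γ * a, 0)`. -/
def nextSqHeight (t : ℝ) : ℝ := 1 / (16 * t) + t / 4

lemma one_le_nextRatio {γ : ℝ} (hγ : 0 ≤ γ) : 1 ≤ nextRatio γ :=
  le_add_of_nonneg_right (div_nonneg zero_le_two hγ)

lemma nextSqHeight_pos {t : ℝ} (ht : 0 < t) : 0 < nextSqHeight t := by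
  unfold nextSqHeight
  positivity

lemma SymmetrizesTo.map_le {β : Type*} [Preorder β] {F : Set E2 → β}
    (hiso : ∀ (f : E2 ≃ᵢ E2) (H : Set E2), Hex H → F (f '' H) = F H)
    (hsteiner : ∀ (v : E2) (c : ℝ) (H : Set E2), ‖v‖ = 1 → Hex H →
      Hex (_root_.steiner v c H) → F (_root_.steiner v c H) ≤ F H)
    {H K : Set E2} (h : SymmetrizesTo H K) : F K ≤ F H := by
  induction h with
  | isometry f hH => exact (hiso f _ hH).le
  | steiner c hv hH hK => exact hsteiner _ c _ hv hH hK
  | trans _ _ ihHK ihKL => exact ihKL.trans ihHK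

lemma hex_unitHex {γ t : ℝ} (hγ : 1 ≤ γ) (ht : 0 < t) : Hex (unitHex γ t) := by
  refine hex_frameHex ?_ hγ (by simp)
  have := Real.sqrt_pos.2 ht
  simp only [det2, Matrix.cons_val_zero, Matrix.cons_val_one, zero_mul, sub_zero]
  positivity

lemma exists_orthonormalBasis_of_inner_eq_zero {m w : E2} (hm : m ≠ 0) (hw : w ≠ 0)
    (hmw : ⟪m, w⟫ = 0) :
    ∃ b : OrthonormalBasis (Fin 2) ℝ E2, m = ‖m‖ • b 0 ∧ w = ‖w‖ • b 1 := by
  have hon : Orthonormal ℝ ![‖m‖⁻¹ • m, ‖w‖⁻¹ • w] := by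
    rw [orthonormal_vecCons_iff]
    simp [norm_smul, inner_smul_left, inner_smul_right, hm, hw, hmw]
  have hspan := hon.linearIndependent.span_eq_top_of_card_eq_finrank (by simp)
  exact ⟨OrthonormalBasis.mk hon hspan.ge, by simp [hm], by simp [hw]⟩

lemma exists_linearIsometryEquiv_of_inner_eq_zero {m w m' w' : E2} (hm₀ : m ≠ 0) (hw₀ : w ≠ 0)
    (hmw : ⟪m, w⟫ = 0) (hmw' : ⟪m', w'⟫ = 0) (hm : ‖m‖ = ‖m'‖) (hw : ‖w‖ = ‖w'‖) :
    ∃ L : E2 ≃ₗᵢ[ℝ] E2, L m = m' ∧ L w = w' := by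
  have hm₀' : m' ≠ 0 := by rwa [← norm_ne_zero_iff, ← hm, norm_ne_zero_iff]
  have hw₀' : w' ≠ 0 := by rwa [← norm_ne_zero_iff, ← hw, norm_ne_zero_iff]
  obtain ⟨b, hbm, hbw⟩ := exists_orthonormalBasis_of_inner_eq_zero hm₀ hw₀ hmw
  obtain ⟨b', hbm', hbw'⟩ := exists_orthonormalBasis_of_inner_eq_zero hm₀' hw₀' hmw'
  refine ⟨b.equiv b' (Equiv.refl _), ?_, ?_⟩
  · rw [hbm, hbm', map_smul, b.equiv_apply_basis, hm, Equiv.refl_apply]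
  · rw [hbw, hbw', map_smul, b.equiv_apply_basis, hw, Equiv.refl_apply]

lemma exists_image_unitHex_eq_frameHex {m w : E2} (hmw : ⟪m, w⟫ = 0) {γ : ℝ} (hγ : 1 ≤ γ)
    (harea : 2 * (γ + 1) * |det2 m w| = 1) :
    ∃ L : E2 ≃ₗᵢ[ℝ] E2, L '' unitHex γ (‖w‖ ^ 2) = frameHex m w γ 0 := by
  have hdet : |det2 m w| = ‖m‖ * ‖w‖ := by
    rw [← abs_of_nonneg (by positivity : 0 ≤ ‖m‖ * ‖w‖), ← sq_eq_sq_iff_abs_eq_abs, det2_sq, hmw]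
    ring
  have hw : w ≠ 0 := by
    rintro rfl
    simp [det2] at harea
  have hw₀ : 0 < ‖w‖ := norm_pos_iff.2 hw
  have hm : 1 / (2 * (γ + 1) * ‖w‖) = ‖m‖ := by
    rw [hdet] at harea
    rw [div_eq_iff (by positivity)]
    linarith
  have hm₀ : 0 < ‖m‖ := hm ▸ by positivity
  have hnorm_fst : ‖(!₂[‖m‖, 0] : E2)‖ = ‖m‖ := by simp [EuclideanSpace.norm_eq]
  have hnorm_snd : ‖(!₂[0, ‖w‖] : E2)‖ = ‖w‖ := by simp [EuclideanSpace.norm_eq]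
  obtain ⟨L, hLm, hLw⟩ := exists_linearIsometryEquiv_of_inner_eq_zero
    (norm_pos_iff.1 (hm₀.trans_eq hnorm_fst.symm))
    (norm_pos_iff.1 (hw₀.trans_eq hnorm_snd.symm)) (by simp [PiLp.inner_apply]) hmw hnorm_fst
    hnorm_snd
  refine ⟨L, ?_⟩
  have himage := image_frameHex (L.toLinearEquiv : E2 →ₗ[ℝ] E2) !₂[‖m‖, 0] !₂[0, ‖w‖] γ 0
  simp only [LinearEquiv.coe_coe, LinearIsometryEquiv.coe_toLinearEquiv, hLm, hLw] at himage
  rw [unitHex, Real.sqrt_sq (norm_nonneg w), hm, himage]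

lemma symmetrizesTo_unitHex {m w : E2} {γ δ : ℝ} (hγ : 1 ≤ γ) (hδ : |δ| ≤ 1)
    (harea : 2 * (γ + 1) * |det2 m w| = 1) :
    SymmetrizesTo (frameHex m w γ δ) (unitHex γ (‖w‖ ^ 2)) := by
  have hdet : det2 m w ≠ 0 := by
    intro h
    simp [h] at harea
  have hw : w ≠ 0 := right_ne_zero_of_det2_ne_zero hdet
  set m₀ := m - (⟪m, w⟫ / ‖w‖ ^ 2) • w
  have hdet₀ : det2 m₀ w = det2 m w := det2_sub_smul_left _ _ _
  obtain ⟨L, hL⟩ := exists_image_unitHex_eq_frameHex (inner_sub_smul_self_eq_zero hw m) hγ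
    (by rwa [hdet₀])
  have hsteiner : steiner (‖w‖⁻¹ • w) 0 (frameHex m w γ δ) = frameHex m₀ w γ 0 :=
    steiner_frameHex hdet hγ hδ
  have hhex₀ : Hex (frameHex m₀ w γ 0) := hex_frameHex (by rwa [hdet₀]) hγ (by simp)
  have hsymm : unitHex γ (‖w‖ ^ 2) = L.symm.toIsometryEquiv '' frameHex m₀ w γ 0 := by
    rw [← hL, ← image_comp]
    simp
  rw [hsymm]
  refine .trans ?_ (.isometry _ hhex₀)
  rw [← hsteiner] at hhex₀ ⊢
  exact .steiner 0 (by simp [norm_smul, hw]) (hex_frameHex hdet hγ hδ) hhex₀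

lemma frameHex_next_diagonal {E : Type*} [AddCommGroup E] [Module ℝ E] (m w : E) {γ : ℝ}
    (hγ : γ ≠ 0) :
    frameHex m w γ 0 =
      frameHex ((2⁻¹ : ℝ) • ((γ - 1) • m - w)) ((2⁻¹ : ℝ) • ((γ + 1) • m + w))
        (nextRatio γ) (2 / γ - 1) := by
  have hsum : (2⁻¹ : ℝ) • ((γ - 1) • m - w) + (2⁻¹ : ℝ) • ((γ + 1) • m + w) = γ • m := by module
  have hdiff : (2⁻¹ : ℝ) • ((γ - 1) • m - w) - (2⁻¹ : ℝ) • ((γ + 1) • m + w) = -(m + w) := by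
    module
  have hapex : nextRatio γ • (2⁻¹ : ℝ) • ((γ - 1) • m - w) +
      (2 / γ - 1) • (2⁻¹ : ℝ) • ((γ + 1) • m + w) = m - w := by
    unfold nextRatio
    match_scalars <;> field_simp <;> ring
  rw [frameHex, frameHex, hsum, hdiff, hapex, zero_smul, add_zero, hexHull_rotate,
    ← hexHull_neg_right, hexHull_rotate]

lemma det2_next_diagonal (m w : E2) (γ : ℝ) :
    det2 ((2⁻¹ : ℝ) • ((γ - 1) • m - w)) ((2⁻¹ : ℝ) • ((γ + 1) • m + w)) = γ / 2 * det2 m w := by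
  simp only [det2, PiLp.add_apply, PiLp.sub_apply, PiLp.smul_apply, smul_eq_mul]
  ring

lemma symmetrizesTo_unitHex_next {γ t : ℝ} (hγ : 1 ≤ γ) (ht : 0 < t) :
    SymmetrizesTo (unitHex γ t) (unitHex (nextRatio γ) (nextSqHeight t)) := by
  set m : E2 := !₂[1 / (2 * (γ + 1) * √t), 0] with hm
  set w : E2 := !₂[0, √t] with hw
  have hγ₀ : 0 < γ := by linarith
  have hδ₁ : |2 / γ - 1| ≤ 1 := by
    rw [abs_le]
    constructor
    · simpa using by positivity
    · rw [sub_le_iff_le_add, div_le_iff₀ hγ₀]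
      linarith
  have hsqrt : √t ^ 2 = t := Real.sq_sqrt ht.le
  have hdet : det2 m w = 1 / (2 * (γ + 1)) := by
    simp only [hm, hw, det2, Matrix.cons_val_zero, Matrix.cons_val_one, zero_mul, sub_zero]
    field_simp
  have harea : 2 * (nextRatio γ + 1) *
      |det2 ((2⁻¹ : ℝ) • ((γ - 1) • m - w)) ((2⁻¹ : ℝ) • ((γ + 1) • m + w))| = 1 := by
    rw [det2_next_diagonal, hdet, abs_of_pos (by positivity), nextRatio]
    field_simp
    ring
  have hnorm : ‖(2⁻¹ : ℝ) • ((γ + 1) • m + w)‖ ^ 2 = nextSqHeight t := by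
    simp only [hm, hw, EuclideanSpace.real_norm_sq_eq, Fin.sum_univ_two, PiLp.add_apply,
      PiLp.smul_apply, smul_eq_mul, Matrix.cons_val_zero, Matrix.cons_val_one,
      Matrix.cons_val_fin_one]
    conv_rhs => rw [← hsqrt, nextSqHeight]
    field_simp
    ring
  rw [← hnorm, unitHex, frameHex_next_diagonal _ _ hγ₀.ne']
  exact symmetrizesTo_unitHex (one_le_nextRatio hγ₀.le) hδ₁ harea

end Symmetrization

section Convergence

lemma tendsto_iterate_of_dist_le {α : Type*} [PseudoMetricSpace α] {f : α → α} {s : Set α}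
    {x y : α} {c : ℝ} (hs : MapsTo f s s) (hy : y ∈ s) (hc₀ : 0 ≤ c) (hc₁ : c < 1)
    (h : ∀ z ∈ s, dist (f z) x ≤ c * dist z x) : Tendsto (fun n => f^[n] y) atTop (𝓝 x) := by
  have hstep : ∀ n, dist (f^[n + 1] y) x ≤ c * dist (f^[n] y) x := fun n => by
    rw [Function.iterate_succ_apply']
    exact h _ (hs.iterate n hy)
  have hlim := (tendsto_pow_atTop_nhds_zero_of_lt_one hc₀ hc₁).mul_const (dist y x)
  rw [zero_mul] at hlim
  exact tendsto_iff_dist_tendsto_zero.2 <| squeeze_zero (fun _ => dist_nonneg)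
    (fun n => le_geom (u := fun n => dist (f^[n] y) x) hc₀ n fun k _ => hstep k) hlim

lemma tendsto_iterate_nextRatio {γ : ℝ} (hγ : 1 ≤ γ) :
    Tendsto (fun n => nextRatio^[n] γ) atTop (𝓝 2) := by
  have le_three : MapsTo nextRatio (Ici 1) (Icc 1 3) := fun x (hx : 1 ≤ x) => by
    refine ⟨one_le_nextRatio (by linarith), ?_⟩
    have : 2 / x ≤ 2 := div_le_self zero_le_two hx
    rw [nextRatio]
    linarith
  have ge_five_thirds : MapsTo nextRatio (Icc 1 3) (Icc (5 / 3) 3) := fun x hx => by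
    refine ⟨?_, (le_three (mem_Ici.2 hx.1)).2⟩
    have : 2 / 3 ≤ 2 / x := div_le_div_of_nonneg_left zero_le_two (by linarith [hx.1]) hx.2
    rw [nextRatio]
    linarith
  have contracts : ∀ x ∈ Icc (5 / 3 : ℝ) 3, dist (nextRatio x) 2 ≤ 3 / 5 * dist x 2 := by
    intro x hx
    have hx₀ : 0 < x := by linarith [hx.1]
    have heq : nextRatio x - 2 = -(x - 2) / x := by
      rw [nextRatio]
      field_simp
      ring
    rw [Real.dist_eq, Real.dist_eq, heq, abs_div, abs_neg, abs_of_pos hx₀, div_le_iff₀ hx₀]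
    nlinarith [abs_nonneg (x - 2), hx.1]
  rw [← tendsto_add_atTop_iff_nat 2]
  simp only [Function.iterate_add_apply]
  exact tendsto_iterate_of_dist_le (ge_five_thirds.mono_left (Icc_subset_Icc_left (by norm_num)))
    (ge_five_thirds (le_three hγ)) (by norm_num) (by norm_num) contracts

lemma tendsto_iterate_nextSqHeight {t : ℝ} (ht : 0 < t) :
    Tendsto (fun n => nextSqHeight^[n] t) atTop (𝓝 (√3 / 6)) := by
  set T := √3 / 6
  have hT : 0 < T := by positivity
  have hTsq : T ^ 2 = 1 / 12 := by
    rw [div_pow, Real.sq_sqrt (by norm_num)]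
    norm_num
  have hnext : ∀ x, nextSqHeight x = 3 * T ^ 2 / (4 * x) + x / 4 := fun x => by
    rw [hTsq, nextSqHeight]
    ring
  have lower : MapsTo nextSqHeight (Ioi 0) (Ici (3 / 4 * T)) := fun x (hx : 0 < x) => by
    have : nextSqHeight x - 3 / 4 * T = ((x - 3 / 2 * T) ^ 2 + 3 / 4 * T ^ 2) / (4 * x) := by
      rw [hnext]
      field_simp
      ring
    have hnonneg : 0 ≤ ((x - 3 / 2 * T) ^ 2 + 3 / 4 * T ^ 2) / (4 * x) := by positivity
    exact sub_nonneg.1 (this ▸ hnonneg)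
  have hpos : Ici (3 / 4 * T) ⊆ Ioi 0 := Ici_subset_Ioi.2 (by positivity)
  have contracts : ∀ x ∈ Ici (3 / 4 * T), dist (nextSqHeight x) T ≤ 3 / 4 * dist x T := by
    intro x hx
    have hx₀ : 0 < x := hpos hx
    rw [mem_Ici] at hx
    have heq : nextSqHeight x - T = (x - 3 * T) / (4 * x) * (x - T) := by
      rw [hnext]
      field_simp
      ring
    rw [Real.dist_eq, Real.dist_eq, heq, abs_mul, abs_div, abs_of_pos (by positivity : 0 < 4 * x)]
    refine mul_le_mul_of_nonneg_right ?_ (abs_nonneg _)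
    rw [div_le_iff₀ (by positivity), abs_le]
    constructor <;> linarith
  rw [← tendsto_add_atTop_iff_nat 1]
  exact tendsto_iterate_of_dist_le (lower.mono_left hpos) (lower ht) (by norm_num) (by norm_num)
    contracts

lemma hausdorffEDist_convexHull_le {E : Type*} [SeminormedAddCommGroup E] [NormedSpace ℝ E]
    (s t : Set E) : hausdorffEDist (convexHull ℝ s) (convexHull ℝ t) ≤ hausdorffEDist s t := by
  by_cases htop : hausdorffEDist s t = ⊤
  · exact htop ▸ le_top
  have infEDist_le : ∀ {s t : Set E}, hausdorffEDist s t ≠ ⊤ → ∀ x ∈ convexHull ℝ s,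
      infEDist x (convexHull ℝ t) ≤ hausdorffEDist s t := by
    intro s t htop x hx
    have hsub : s ⊆ cthickening (hausdorffEDist s t).toReal (convexHull ℝ t) := fun y hy => by
      rw [mem_cthickening_iff, ENNReal.ofReal_toReal htop]
      exact (infEDist_anti (subset_convexHull ℝ t)).trans (infEDist_le_hausdorffEDist_of_mem hy)
    have hmem := convexHull_min hsub ((convex_convexHull ℝ t).cthickening _) hx
    rwa [mem_cthickening_iff, ENNReal.ofReal_toReal htop] at hmem
  refine hausdorffEDist_le_of_infEDist (infEDist_le htop) ?_
  rw [hausdorffEDist_comm] at htop ⊢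
  exact infEDist_le htop

lemma hausdorffEDist_hexHull_le {E : Type*} [SeminormedAddCommGroup E] [NormedSpace ℝ E]
    (p q r p' q' r' : E) :
    hausdorffEDist (hexHull p q r) (hexHull p' q' r') ≤
      max (edist p p') (max (edist q q') (edist r r')) := by
  have hinsert : ∀ (a b : E) (s t : Set E),
      hausdorffEDist (insert a s) (insert b t) ≤ max (edist a b) (hausdorffEDist s t) := by
    intro a b s t
    rw [insert_eq, insert_eq, ← hausdorffEDist_singleton]
    exact hausdorffEDist_union_le
  refine (hausdorffEDist_convexHull_le _ _).trans ?_
  iterate 5 refine (hinsert _ _ _ _).trans (max_le (by simp) ?_)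
  simp

lemma hausdorffTendsto_hexHull {P Q R : ℕ → E2} {p q r : E2} (hP : Tendsto P atTop (𝓝 p))
    (hQ : Tendsto Q atTop (𝓝 q)) (hR : Tendsto R atTop (𝓝 r)) :
    HausdorffTendsto (fun n => hexHull (P n) (Q n) (R n)) (hexHull p q r) := by
  have hlim := (tendsto_iff_edist_tendsto_0.1 hP).max
    ((tendsto_iff_edist_tendsto_0.1 hQ).max (tendsto_iff_edist_tendsto_0.1 hR))
  rw [max_self, max_self] at hlim
  exact tendsto_of_tendsto_of_tendsto_of_le_of_le tendsto_const_nhds hlim (fun _ => zero_le)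
    fun n => hausdorffEDist_hexHull_le _ _ _ _ _ _

lemma hausdorffTendsto_unitHex {γ t : ℕ → ℝ} {γ₀ t₀ : ℝ} (hγ₀ : 0 ≤ γ₀) (ht₀ : 0 < t₀)
    (hγ : Tendsto γ atTop (𝓝 γ₀)) (ht : Tendsto t atTop (𝓝 t₀)) :
    HausdorffTendsto (fun n => unitHex (γ n) (t n)) (unitHex γ₀ t₀) := by
  have hsqrt : Tendsto (fun n => √(t n)) atTop (𝓝 (√t₀)) := (Real.continuous_sqrt.tendsto _).comp ht
  have hwidth : Tendsto (fun n => 1 / (2 * (γ n + 1) * √(t n))) atTop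
      (𝓝 (1 / (2 * (γ₀ + 1) * √t₀))) :=
    tendsto_const_nhds.div (((hγ.add_const 1).const_mul 2).mul hsqrt)
      (by have := Real.sqrt_pos.2 ht₀; positivity)
  have hpair : ∀ {x y : ℕ → ℝ} {a b : ℝ}, Tendsto x atTop (𝓝 a) → Tendsto y atTop (𝓝 b) →
      Tendsto (fun n => (!₂[x n, y n] : E2)) atTop (𝓝 !₂[a, b]) := by
    intro x y a b hx hy
    have : Continuous fun z : ℝ × ℝ => (!₂[z.1, z.2] : E2) := by fun_prop
    exact (this.tendsto (a, b)).comp (hx.prodMk_nhds hy)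
  have hm := hpair hwidth (tendsto_const_nhds (x := 0))
  have hw := hpair (tendsto_const_nhds (x := 0)) hsqrt
  exact hausdorffTendsto_hexHull (hm.add hw) (hm.sub hw)
    ((hγ.smul hm).add (tendsto_const_nhds.smul hw))

end Convergence

section RegularHexagon

lemma hexVertex_add_three (k : ℕ) : hexVertex (k + 3) = -hexVertex k := by
  have hangle : ((k : ℝ) + 3) * π / 3 = k * π / 3 + π := by ring
  ext i
  fin_cases i <;> simp [hexVertex, hangle, Real.cos_add_pi, Real.sin_add_pi]

lemma stdHexagon_eq_frameHex : stdHexagon = frameHex !₂[1 / 2, 0] !₂[0, √3 / 2] 2 0 := by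
  have hangle : 2 * π / 3 = π - π / 3 := by ring
  have v₀ : hexVertex 0 = (2 : ℝ) • !₂[1 / 2, 0] + (0 : ℝ) • !₂[0, √3 / 2] := by
    ext i
    fin_cases i <;> simp [hexVertex]
  have v₁ : hexVertex 1 = !₂[1 / 2, 0] + !₂[0, √3 / 2] := by
    ext i
    fin_cases i <;> simp [hexVertex]
  have v₂ : hexVertex 2 = -(!₂[1 / 2, 0] - !₂[0, √3 / 2]) := by
    ext i
    fin_cases i <;> simp [hexVertex, hangle]
  rw [frameHex, ← v₀, ← v₁, ← neg_neg (!₂[1 / 2, 0] - _), ← v₂, ← hexHull_rotate,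
    hexHull_neg_right, stdHexagon, hexHull]
  congr 1
  simp only [← hexVertex_add_three]
  ext x
  simp [Fin.exists_fin_succ, eq_comm (a := x)]

lemma IsSimilarity.exists_isometryEquiv {f : E2 → E2} (hf : IsSimilarity f) :
    ∃ (σ : ℝ) (g : E2 ≃ᵢ E2), 0 < σ ∧ ∀ x, f x = g (σ • x) := by
  obtain ⟨σ, hσ, hdist⟩ := hf
  have hiso : Isometry (fun x : E2 => f (σ⁻¹ • x)) := by
    refine Isometry.of_dist_eq fun x y => ?_
    rw [hdist, dist_smul₀, norm_inv, Real.norm_of_nonneg hσ.le, mul_inv_cancel_left₀ hσ.ne']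
  refine ⟨σ, (hiso.affineIsometryOfStrictConvexSpace.toAffineIsometryEquiv rfl).toIsometryEquiv,
    hσ, fun x => ?_⟩
  change f x = f (σ⁻¹ • σ • x)
  rw [inv_smul_smul₀ hσ.ne']

lemma volume_image_isometryEquiv (g : E2 ≃ᵢ E2) (s : Set E2) : volume (g '' s) = volume s := by
  rw [← EuclideanSpace.euclideanHausdorffMeasure_eq_volume]
  exact g.isometry.euclideanHausdorffMeasure_image s

lemma exists_eq_image_unitHex {K : Set E2} (hK : IsRegularHexagon K) (hvol : volume K = 1) :
    ∃ g : E2 ≃ᵢ E2, K = g '' unitHex 2 (√3 / 6) := by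
  obtain ⟨f, hf, rfl⟩ := hK
  obtain ⟨σ, g, hσ, hfg⟩ := hf.exists_isometryEquiv
  set m : E2 := σ • !₂[1 / 2, 0] with hm
  set w : E2 := σ • !₂[0, √3 / 2] with hw
  have himage : f '' stdHexagon = g '' frameHex m w 2 0 := by
    have := image_frameHex (σ • LinearMap.id : E2 →ₗ[ℝ] E2) !₂[1 / 2, 0] !₂[0, √3 / 2] 2 0
    simp only [LinearMap.smul_apply, LinearMap.id_apply] at this
    rw [← this, ← stdHexagon_eq_frameHex, image_image]
    exact image_congr fun x _ => hfg x
  have hdet : det2 m w = σ ^ 2 * (√3 / 4) := by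
    simp only [hm, hw, det2, PiLp.smul_apply, smul_eq_mul, Matrix.cons_val_zero,
      Matrix.cons_val_one, Matrix.cons_val_fin_one]
    ring
  have harea : 2 * (2 + 1) * |det2 m w| = 1 := by
    rwa [himage, volume_image_isometryEquiv, volume_frameHex m w one_le_two (by simp),
      ENNReal.ofReal_eq_one] at hvol
  have hnorm : ‖w‖ ^ 2 = √3 / 6 := by
    have hσ₂ : 6 * (σ ^ 2 * (√3 / 4)) = 1 := by
      rw [hdet, abs_of_pos (by positivity)] at harea
      linarith
    calc ‖w‖ ^ 2 = σ ^ 2 * (√3 / 2) ^ 2 := by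
          simp [hw, EuclideanSpace.real_norm_sq_eq, mul_pow]
      _ = √3 / 6 * (6 * (σ ^ 2 * (√3 / 4))) := by ring
      _ = √3 / 6 := by rw [hσ₂, mul_one]
  have hmw : ⟪m, w⟫ = 0 := by simp [hm, hw, PiLp.inner_apply]
  obtain ⟨L, hL⟩ := exists_image_unitHex_eq_frameHex hmw one_le_two harea
  refine ⟨L.toIsometryEquiv.trans g, ?_⟩
  rw [himage, ← hL, hnorm, image_image]
  rfl

end RegularHexagon

section Minimality

lemma exists_symmetrizesTo_unitHex {H : Set E2} (hH : Hex H) (hvol : volume H = 1) :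
    ∃ γ t : ℝ, 1 ≤ γ ∧ 0 < t ∧ SymmetrizesTo H (unitHex γ t) := by
  obtain ⟨x₀, p, q, r, hHeq⟩ := hH.1
  have htranslate : IsometryEquiv.addLeft (-x₀) '' H = hexHull p q r := by
    rw [hHeq, image_image]
    simp [hexHull]
  have hvol' : volume (hexHull p q r) = 1 := by
    rwa [← htranslate, volume_image_isometryEquiv]
  obtain ⟨m, w, γ, δ, hdet, hγ, hδ, hframe⟩ := exists_hexHull_eq_frameHex
    (interior_nonempty_of_volume_ne_zero (convex_convexHull ℝ _) (hvol'.trans_ne one_ne_zero))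
  have harea : 2 * (γ + 1) * |det2 m w| = 1 := by
    rwa [hframe, volume_frameHex m w hγ hδ, ENNReal.ofReal_eq_one] at hvol'
  have hw : 0 < ‖w‖ := norm_pos_iff.2 (right_ne_zero_of_det2_ne_zero hdet)
  refine ⟨γ, ‖w‖ ^ 2, hγ, by positivity, .trans (.isometry (.addLeft (-x₀)) hH) ?_⟩
  rw [htranslate, hframe]
  exact symmetrizesTo_unitHex hγ hδ harea

lemma symmetrizesTo_unitHex_iterate {H : Set E2} {γ t : ℝ} (hγ : 1 ≤ γ) (ht : 0 < t)
    (h : SymmetrizesTo H (unitHex γ t)) (n : ℕ) :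
    SymmetrizesTo H (unitHex (nextRatio^[n] γ) (nextSqHeight^[n] t)) := by
  induction n generalizing γ t with
  | zero => exact h
  | succ _ ih =>
    exact ih (one_le_nextRatio (by linarith)) (nextSqHeight_pos ht)
      (h.trans (symmetrizesTo_unitHex_next hγ ht))

lemma exists_symmetrizesTo_hausdorffTendsto {H : Set E2} (hH : Hex H) (hvol : volume H = 1) :
    ∃ K : ℕ → Set E2, (∀ n, Hex (K n)) ∧ (∀ n, SymmetrizesTo H (K n)) ∧
      HausdorffTendsto K (unitHex 2 (√3 / 6)) := by
  obtain ⟨γ, t, hγ, ht, h⟩ := exists_symmetrizesTo_unitHex hH hvol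
  have hratio : MapsTo nextRatio (Ici 1) (Ici 1) := fun x hx =>
    one_le_nextRatio (zero_le_one.trans hx)
  have hheight : MapsTo nextSqHeight (Ioi 0) (Ioi 0) := fun _ => nextSqHeight_pos
  exact ⟨fun n => unitHex (nextRatio^[n] γ) (nextSqHeight^[n] t),
    fun n => hex_unitHex (hratio.iterate n hγ) (hheight.iterate n ht),
    symmetrizesTo_unitHex_iterate hγ ht h,
    hausdorffTendsto_unitHex zero_le_two (by positivity) (tendsto_iterate_nextRatio hγ)
      (tendsto_iterate_nextSqHeight ht)⟩

end Minimality

theorem statement1_general {β : Type*} [CompleteLattice β] (F : Set E2 → β)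
    (hiso : ∀ (f : E2 ≃ᵢ E2) (H : Set E2), Hex H → F (f '' H) = F H)
    (hlsc : ∀ (Hn : ℕ → Set E2) (H : Set E2), (∀ n, Hex (Hn n)) → Hex H →
      HausdorffTendsto Hn H → F H ≤ liminf (fun n => F (Hn n)) atTop)
    (hsteiner : ∀ (v : E2) (c : ℝ) (H : Set E2), ‖v‖ = 1 → Hex H →
      Hex (steiner v c H) → F (steiner v c H) ≤ F H)
    (Hstar : Set E2) (hreg : IsRegularHexagon Hstar) (hvolstar : volume Hstar = 1)
    (H : Set E2) (hH : Hex H) (hvol : volume H = 1) : F Hstar ≤ F H := by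
  obtain ⟨g, rfl⟩ := exists_eq_image_unitHex hreg hvolstar
  obtain ⟨K, hKhex, hHK, hlim⟩ := exists_symmetrizesTo_hausdorffTendsto hH hvol
  have hhex : Hex (unitHex 2 (√3 / 6)) := hex_unitHex one_le_two (by positivity)
  calc F (g '' unitHex 2 (√3 / 6)) = F (unitHex 2 (√3 / 6)) := hiso g _ hhex
    _ ≤ liminf (fun n => F (K n)) atTop := hlsc K _ hKhex hhex hlim
    _ ≤ liminf (fun _ : ℕ => F H) atTop :=
      liminf_le_liminf (.of_forall fun n => (hHK n).map_le hiso hsteiner)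
    _ = F H := liminf_const _

/-- Any functional on `𝓗` with values in `ℝ ∪ {+∞}` which is invariant
under isometries, lower semicontinuous with respect to Hausdorff convergence, and
decreasing under Steiner symmetrization, is minimized over unit-area elements of `𝓗`
by the regular hexagon. -/
theorem statement1 (F : Set E2 → EReal)
    (hbot : ∀ H : Set E2, Hex H → F H ≠ ⊥)
    (hiso : ∀ (f : E2 ≃ᵢ E2) (H : Set E2), Hex H → F (f '' H) = F H)
    (hlsc : ∀ (Hn : ℕ → Set E2) (H : Set E2), (∀ n, Hex (Hn n)) → Hex H →
      HausdorffTendsto Hn H → F H ≤ liminf (fun n => F (Hn n)) atTop)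
    (hsteiner : ∀ (v : E2) (c : ℝ) (H : Set E2), ‖v‖ = 1 → Hex H →
      Hex (steiner v c H) → F (steiner v c H) ≤ F H)
    (Hstar : Set E2) (hreg : IsRegularHexagon Hstar) (hvolstar : volume Hstar = 1) :
    ∀ H : Set E2, Hex H → volume H = 1 → F Hstar ≤ F H :=
  statement1_general F hiso hlsc hsteiner Hstar hreg hvolstar
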